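/- Let H be a real Hilbert space, let η > 0, L > 0, M ≥ 0, let K be a finite index set with nonnegative weights p : K → ℝ summing to 1, let F : H → ℝ be differentiable and M-Lipschitz continuous, and for each k ∈ K let F_k : H → ℝ be differentiable with ∇F_k L-Lipschitz and ‖∇F_k(x) − ∇F(x)‖ ≤ δ_k for all x ∈ H, where δ_k ≥ 0. Fix w₀ ∈ H and define, for each k, w^k(0) = w₀ and w^k(e) = w^k(e−1) − η∇F_k(w^k(e−1)), and define v(0) = w₀ and v(e) = v(e−1) − η∇F(v(e−1)). Then for any E ∈ ℕ, |F(Σ_{k∈K} p_k·w^k(E)) − F(v(E))| ≤ (M·(Σ_{k∈K} p_k·δ_k)/L)·((ηL + 1)^E − 1). -/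

import Mathlib

/-!
The virtual trajectory nearly follows each client's descent: a step along `∇F` instead of `∇F_k`
moves the end point by at most `η δ_k`. A client step is `(ηL + 1)`-Lipschitz, so an error
committed `i` steps ago has grown by at most `(ηL + 1) ^ i`, and the geometric series sums to
`(δ_k / L) ((ηL + 1) ^ E - 1)`. Averaging the clients averages these bounds, by convexity of the
distance, and the Lipschitz constant of `F` turns them into a bound on the loss.
-/

open Finset
open scoped NNReal

theorem discrete_gronwall_const {R : Type*} [CommSemiring R] [PartialOrder R] [IsOrderedRing R]
    {u : ℕ → R} {b c : R} (hc : 0 ≤ c) (hu : ∀ n, u (n + 1) ≤ c * u n + b) (n : ℕ) :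
    u n ≤ u 0 * c ^ n + b * ∑ i ∈ range n, c ^ i := by
  have gronwall := discrete_gronwall_prod_general (n₀ := 0) (b := fun _ ↦ b) (c := fun _ ↦ c)
    (fun n _ ↦ hu n) (fun _ _ ↦ hc) n.zero_le
  rw [← sum_range_reflect]
  simpa [← range_eq_Ico, ← mul_sum, Nat.sub_add_eq, Nat.sub_right_comm] using gronwall

theorem dist_orbit_pseudoOrbit_le {X : Type*} [PseudoMetricSpace X] {f : X → X} {c : ℝ≥0} {ε : ℝ}
    {x y : ℕ → X} (hf : LipschitzWith c f) (hx : ∀ n, x (n + 1) = f (x n))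
    (hy : ∀ n, dist (f (y n)) (y (n + 1)) ≤ ε) (n : ℕ) :
    dist (x n) (y n) ≤ dist (x 0) (y 0) * c ^ n + ε * ∑ i ∈ range n, (c : ℝ) ^ i := by
  refine discrete_gronwall_const (u := fun n ↦ dist (x n) (y n)) c.coe_nonneg (fun n ↦ ?_) n
  calc dist (x (n + 1)) (y (n + 1))
      ≤ dist (f (x n)) (f (y n)) + dist (f (y n)) (y (n + 1)) := by
        rw [hx]
        exact dist_triangle _ _ _
    _ ≤ c * dist (x n) (y n) + ε := add_le_add (hf.dist_le_mul _ _) (hy n)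

section DescentStep

variable {H : Type*} [SeminormedAddCommGroup H] [NormedSpace ℝ H] {G G' : H → H} {η : ℝ} {L : ℝ≥0}

/-- One step of size `η` against the vector field `G`; it is a gradient descent step on a loss
when `G` is the gradient of that loss. -/
def descentStep (η : ℝ) (G : H → H) (x : H) : H :=
  x - η • G x

theorem lipschitzWith_descentStep (η : ℝ) (hG : LipschitzWith L G) :
    LipschitzWith (‖η‖₊ * L + 1) (descentStep η G) := by
  rw [add_comm]
  exact LipschitzWith.id.sub ((lipschitzWith_smul η).comp hG)

theorem dist_descentStep_descentStep (η : ℝ) (G G' : H → H) (x : H) :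
    dist (descentStep η G x) (descentStep η G' x) = |η| * ‖G x - G' x‖ := by
  rw [descentStep, descentStep, dist_sub_left, dist_smul₀, Real.norm_eq_abs, dist_eq_norm]

theorem dist_le_of_forall_eq_descentStep {δ : ℝ} (hη : 0 ≤ η) (hL : 0 < L) (hG : LipschitzWith L G)
    {w v : ℕ → H} (h₀ : w 0 = v 0) (hw : ∀ e, w (e + 1) = descentStep η G (w e))
    (hv : ∀ e, v (e + 1) = descentStep η G' (v e)) (hδ : ∀ e, ‖G (v e) - G' (v e)‖ ≤ δ)
    (E : ℕ) : dist (w E) (v E) ≤ δ / L * ((η * L + 1) ^ E - 1) := by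
  have step_error (e : ℕ) : dist (descentStep η G (v e)) (v (e + 1)) ≤ η * δ := by
    rw [hv, dist_descentStep_descentStep, abs_of_nonneg hη]
    exact mul_le_mul_of_nonneg_left (hδ e) hη
  have L_ne_zero : (L : ℝ) ≠ 0 := by positivity
  calc dist (w E) (v E)
      ≤ η * δ * ∑ i ∈ range E, (η * L + 1) ^ i := by
        simpa [h₀, abs_of_nonneg hη] using
          dist_orbit_pseudoOrbit_le (lipschitzWith_descentStep η hG) hw step_error E
    _ = δ / L * ((η * L + 1) ^ E - 1) := by
        rw [← mul_geom_sum]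
        field_simp
        ring

end DescentStep

theorem fedgroup_no_intergroup_bound_general
    {H Y : Type*} [SeminormedAddCommGroup H] [NormedSpace ℝ H] [PseudoMetricSpace Y]
    {η : ℝ} {L M : ℝ≥0} (hη : 0 ≤ η) (hL : 0 < L) {K : Type*} [Fintype K]
    {p δ : K → ℝ} (hp : ∀ k, 0 ≤ p k) (hsum : ∑ k, p k = 1)
    {F : H → Y} (hF : LipschitzWith M F)
    {G : H → H} {Gk : K → H → H} (hGk : ∀ k, LipschitzWith L (Gk k))
    {w : K → ℕ → H} {v : ℕ → H} (hdiv : ∀ k e, ‖Gk k (v e) - G (v e)‖ ≤ δ k)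
    (h₀ : ∀ k, w k 0 = v 0) (hw : ∀ k e, w k (e + 1) = descentStep η (Gk k) (w k e))
    (hv : ∀ e, v (e + 1) = descentStep η G (v e)) (E : ℕ) :
    dist (F (∑ k, p k • w k E)) (F (v E)) ≤
      M * (∑ k, p k * δ k) / L * ((η * L + 1) ^ E - 1) :=
  calc dist (F (∑ k, p k • w k E)) (F (v E))
      ≤ M * dist (∑ k, p k • w k E) (v E) := hF.dist_le_mul _ _
    _ ≤ M * ∑ k, p k * dist (w k E) (v E) := by
        gcongr
        exact (convexOn_univ_dist (v E)).map_sum_le (fun k _ ↦ hp k) hsum fun _ _ ↦ Set.mem_univ _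
    _ ≤ M * ∑ k, p k * (δ k / L * ((η * L + 1) ^ E - 1)) := by
        gcongr with k
        · exact hp k
        · exact dist_le_of_forall_eq_descentStep hη hL (hGk k) (h₀ k) (hw k) hv (hdiv k) E
    _ = M * (∑ k, p k * δ k) / L * ((η * L + 1) ^ E - 1) := by
        simp only [← mul_assoc, ← mul_div_assoc, ← sum_mul, ← sum_div]

/-- Theorem 1: the convergence bound of FedGroup without inter-group
aggregation is `(δM/L)((ηL+1)^E − 1)`. -/
theorem fedgroup_no_intergroup_bound
    {H : Type*} [NormedAddCommGroup H] [InnerProductSpace ℝ H] [CompleteSpace H]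
    (η L M : ℝ) (hη : 0 < η) (hL : 0 < L) (hM : 0 ≤ M)
    {K : Type*} [Fintype K]
    (p : K → ℝ) (hp : ∀ k, 0 ≤ p k) (hsum : ∑ k, p k = 1)
    (δ : K → ℝ) (hδ : ∀ k, 0 ≤ δ k)
    (F : H → ℝ) (hF : Differentiable ℝ F)
    (hFlip : ∀ w v : H, |F w - F v| ≤ M * ‖w - v‖)
    (Fk : K → H → ℝ) (hFk : ∀ k, Differentiable ℝ (Fk k))
    (hlip : ∀ k, ∀ w v : H, ‖gradient (Fk k) w - gradient (Fk k) v‖ ≤ L * ‖w - v‖)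
    (hdiv : ∀ k, ∀ x : H, ‖gradient (Fk k) x - gradient F x‖ ≤ δ k)
    (w₀ : H) (w : K → ℕ → H) (v : ℕ → H)
    (hw0 : ∀ k, w k 0 = w₀) (hv0 : v 0 = w₀)
    (hw : ∀ k, ∀ e : ℕ, 1 ≤ e → w k e = w k (e - 1) - η • gradient (Fk k) (w k (e - 1)))
    (hv : ∀ e : ℕ, 1 ≤ e → v e = v (e - 1) - η • gradient F (v (e - 1)))
    (E : ℕ) :
    |F (∑ k, p k • w k E) - F (v E)| ≤
      M * (∑ k, p k * δ k) / L * ((η * L + 1) ^ E - 1) := by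
  lift L to ℝ≥0 using hL.le
  lift M to ℝ≥0 using hM
  exact fedgroup_no_intergroup_bound_general (F := F) hη.le hL hp hsum
    (.of_dist_le_mul fun x y ↦ by simpa [dist_eq_norm] using hFlip x y)
    (fun k ↦ .of_dist_le_mul fun x y ↦ by simpa [dist_eq_norm] using hlip k x y)
    (fun k e ↦ hdiv k (v e)) (fun k ↦ (hw0 k).trans hv0.symm)
    (fun k e ↦ hw k (e + 1) e.succ_pos) (fun e ↦ hv (e + 1) e.succ_pos) E
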